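/- The complete bipartite graph K_{q−1,(q−1)^{q−1}} is q-solvable for every q ≥ 2. -/

import Mathlib

/-- A directed graph (arc `u → v` meaning `v` sees `u`'s hat) is `q`-solvable if there
are guessing functions, each depending only on the hats the vertex sees, such that
every hat assignment is guessed correctly by some vertex. -/
def HatSolvable {V : Type*} (adj : V → V → Prop) (q : ℕ) : Prop :=
  ∃ f : V → ((V → Fin q) → Fin q),
    (∀ (v : V) (x y : V → Fin q), (∀ u, adj u v → x u = y u) → f v x = f v y) ∧
    ∀ x : V → Fin q, ∃ v, f v x = x v

/-- `i` is the first coordinate at which `x` agrees with `z`. -/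
def FirstAgree {m : ℕ} (z : Fin m → Fin m) (x : Fin m → Fin (m + 1)) (i : Fin m) : Prop :=
  x i = (z i).castSucc ∧ ∀ j < i, x j ≠ (z j).castSucc

open Classical in
/-- The guess of `w_z`: the first agreement coordinate, or `m` if there is none. -/
noncomputable def rightGuess {m : ℕ} (z : Fin m → Fin m) (x : Fin m → Fin (m + 1)) : Fin (m + 1) :=
  if h : ∃ i, FirstAgree z x i then (Classical.choose h).castSucc else Fin.last m

lemma rightGuess_of_first {m : ℕ} {z : Fin m → Fin m} {x : Fin m → Fin (m + 1)} {i : Fin m}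
    (hi : FirstAgree z x i) : rightGuess z x = i.castSucc := by
  have h : ∃ i, FirstAgree z x i := ⟨i, hi⟩
  have hc := Classical.choose_spec h
  rw [rightGuess, dif_pos h]
  congr 1
  rcases lt_trichotomy (Classical.choose h) i with hlt | heq | hlt
  · exact absurd hc.1 (hi.2 _ hlt)
  · exact heq
  · exact absurd hi.1 (hc.2 _ hlt)

lemma exists_prefix {m : ℕ} (T : Set (Fin m → Fin (m + 1)))
    (hT : ∀ c : Fin m → Fin (m + 1), ∃ t ∈ T, ∀ i, t i ≠ c i) (k : ℕ) (hk : k ≤ m) :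
    ∃ z : Fin m → Fin m, ∀ i : Fin m, i.val < k → ∃ t ∈ T, FirstAgree z t i := by
  induction k with
  | zero => exact ⟨id, fun i hi => absurd hi (Nat.not_lt_zero _)⟩
  | succ k ih =>
    obtain ⟨z, hz⟩ := ih (by omega)
    obtain ⟨t, htT, ht⟩ := hT (fun j => if j.val < k then (z j).castSucc else Fin.last m)
    let kk : Fin m := ⟨k, hk⟩
    have hkl : t kk ≠ Fin.last m := by simpa [kk] using ht kk
    obtain ⟨a, ha⟩ := Fin.exists_castSucc_eq.2 hkl
    have hne : ∀ j : Fin m, j.val < k → Function.update z kk a j = z j := by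
      intro j hj
      apply Function.update_of_ne
      intro h
      rw [h] at hj
      exact lt_irrefl _ hj
    refine ⟨Function.update z kk a, fun i hi => ?_⟩
    rcases Nat.lt_succ_iff_lt_or_eq.1 hi with hlt | heq
    · obtain ⟨s, hs, h1, h2⟩ := hz i hlt
      refine ⟨s, hs, by rw [hne i hlt]; exact h1, fun j hj => ?_⟩
      rw [hne j (lt_trans hj hlt)]
      exact h2 j hj
    · have hik : i = kk := Fin.ext heq
      subst hik
      refine ⟨t, htT, by simp [ha], fun j hj => ?_⟩
      have hj' : j.val < k := hj
      rw [hne j hj']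
      simpa [hj'] using ht j

lemma exists_dominating {m : ℕ} (y : (Fin m → Fin m) → Fin (m + 1)) :
    ∃ c : Fin m → Fin (m + 1), ∀ x : Fin m → Fin (m + 1),
      (∀ z, rightGuess z x ≠ y z) → ∃ i, c i = x i := by
  by_contra hcon
  push Not at hcon
  obtain ⟨z, hz⟩ := exists_prefix {x | ∀ z, rightGuess z x ≠ y z} (fun c => by
    obtain ⟨x, hx, h⟩ := hcon c
    exact ⟨x, hx, fun i => (h i).symm⟩) m le_rfl
  by_cases hl : y z = Fin.last m
  · obtain ⟨x, hx, h⟩ := hcon (fun j => (z j).castSucc)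
    apply hx z
    rw [hl, rightGuess, dif_neg]
    rintro ⟨i, hi, -⟩
    exact h i hi.symm
  · obtain ⟨i, hi⟩ := Fin.exists_castSucc_eq.2 hl
    obtain ⟨t, ht, hf⟩ := hz i i.2
    exact ht z (by rw [rightGuess_of_first hf, hi])

lemma bipartite_aux (m : ℕ) :
    HatSolvable
      (fun a b : Fin m ⊕ (Fin m → Fin m) => a.isLeft ≠ b.isLeft) (m + 1) := by
  choose c hc using fun y => exists_dominating (m := m) y
  refine ⟨fun v x => Sum.elim (fun i => c (fun z => x (Sum.inr z)) i)
    (fun z => rightGuess z (fun i => x (Sum.inl i))) v, ?_, ?_⟩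
  · rintro (i | z) x y h
    · have : (fun z => x (Sum.inr z)) = fun z => y (Sum.inr z) :=
        funext fun z => h _ (by simp)
      simp only [Sum.elim_inl, this]
    · have : (fun i => x (Sum.inl i)) = fun i => y (Sum.inl i) :=
        funext fun i => h _ (by simp)
      simp only [Sum.elim_inr, this]
  · intro x
    by_cases h : ∃ z, rightGuess z (fun i => x (Sum.inl i)) = x (Sum.inr z)
    · obtain ⟨z, hz⟩ := h
      exact ⟨Sum.inr z, hz⟩
    · push Not at h
      obtain ⟨i, hi⟩ := hc (fun z => x (Sum.inr z)) (fun i => x (Sum.inl i)) h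
      exact ⟨Sum.inl i, hi⟩

/-- The complete bipartite graph $K_{q-1,(q-1)^{q-1}}$ is $q$-solvable. -/
theorem bipartite_solvable (q : ℕ) (hq : 2 ≤ q) :
    HatSolvable
      (fun a b : Fin (q - 1) ⊕ (Fin (q - 1) → Fin (q - 1)) => a.isLeft ≠ b.isLeft) q := by
  obtain ⟨m, rfl⟩ : ∃ m, q = m + 1 := ⟨q - 1, by omega⟩
  exact bipartite_aux m
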